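/- arXiv:2111.14728 — 2 statements merged into one kernel-verified Lean document; each statement's English description precedes it below -/
import Mathlib

section
/- Let $U$ be a finite-dimensional real inner product space, $f : U \to \mathbb{R} \cup \{+\infty\}$ a proper convex function, $\alpha > 0$, and $w \in U$. Suppose $w^+ \in U$ minimizes $v \mapsto \alpha f(v) + \tfrac{1}{2}\|v - w\|^2$ over $U$. Then for every $z \in U$ with $f(z) < \infty$, $\|w^+ - z\|^2 \le \|w - z\|^2 - 2\alpha\,(f(w^+) - f(z)) - \|w^+ - w\|^2$; in particular $\|w^+ - z\|^2 \le \|w - z\|^2 - 2\alpha\,(f(w^+) - f(z))$. -/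
/-!
The proximal objective `α f + ‖· - w‖² / 2` is `1`-strongly convex, so it grows quadratically away
from its minimizer `u`: its value at `z` exceeds its value at `u` by at least `‖u - z‖² / 2`.
Multiplied by `2` and rearranged, this growth estimate is the Fejér inequality. As `f` is finite at
`u` and at `z`, the argument takes place in the effective domain of `f`, where `f` is real-valued.
-/

open Set Filter Topology

section StrongConvexity

lemma add_modulus_le_of_uniformConvexOn_of_isMinOn {E : Type*} [NormedAddCommGroup E]
    [NormedSpace ℝ E] {s : Set E} {φ : ℝ → ℝ} {f : E → ℝ} {x y : E} (hf : UniformConvexOn s φ f)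
    (hmin : IsMinOn f s x) (hx : x ∈ s) (hy : y ∈ s) :
    f x + φ ‖x - y‖ ≤ f y := by
  have growth_of_lt_one : ∀ a ∈ Ioo (0 : ℝ) 1, f x + a * φ ‖x - y‖ ≤ f y := by
    rintro a ⟨ha₀, ha₁⟩
    have hb : 0 < 1 - a := sub_pos.2 ha₁
    have hab : a + (1 - a) = 1 := add_sub_cancel a 1
    have hmid : f x ≤ a * f x + (1 - a) * f y - a * (1 - a) * φ ‖x - y‖ :=
      (isMinOn_iff.1 hmin _ (hf.1 hx hy ha₀.le hb.le hab)).trans (hf.2 hx hy ha₀.le hb.le hab)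
    refine le_of_mul_le_mul_left ?_ hb
    linarith
  have hlim : Tendsto (fun a : ℝ ↦ f x + a * φ ‖x - y‖) (𝓝[<] 1) (𝓝 (f x + 1 * φ ‖x - y‖)) :=
    (Continuous.tendsto (by fun_prop) 1).mono_left nhdsWithin_le_nhds
  rw [← one_mul (φ ‖x - y‖)]
  exact le_of_tendsto hlim (eventually_of_mem (Ioo_mem_nhdsLT zero_lt_one) growth_of_lt_one)

variable {E : Type*} [NormedAddCommGroup E] [InnerProductSpace ℝ E] {s : Set E}

lemma strongConvexOn_mul_norm_sub_sq (hs : Convex ℝ s) (m : ℝ) (w : E) :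
    StrongConvexOn s m fun v ↦ m / 2 * ‖v - w‖ ^ 2 := by
  rw [strongConvexOn_iff_convex]
  have affine_remainder : (fun v ↦ m / 2 * ‖v - w‖ ^ 2 - m / 2 * ‖v‖ ^ 2) =
      fun v ↦ (-m • innerₗ E w) v + m / 2 * ‖w‖ ^ 2 := by
    ext v
    rw [norm_sub_sq_real, real_inner_comm, LinearMap.smul_apply, innerₗ_apply_apply, smul_eq_mul]
    ring
  rw [affine_remainder]
  exact ((-m • innerₗ E w).convexOn hs).add_const _

lemma strongConvexOn_mul_add_half_norm_sub_sq {g : E → ℝ} {α : ℝ} (hg : ConvexOn ℝ s g)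
    (hα : 0 ≤ α) (w : E) :
    StrongConvexOn s 1 fun v ↦ α * g v + ‖v - w‖ ^ 2 / 2 := by
  have objective_eq : (fun v ↦ α * g v + ‖v - w‖ ^ 2 / 2) =
      (fun v ↦ α • g v) + fun v ↦ 1 / 2 * ‖v - w‖ ^ 2 := by
    ext v
    simp only [Pi.add_apply, smul_eq_mul]
    ring
  rw [objective_eq]
  simpa only [StrongConvexOn, zero_add] using
    (hg.smul hα).uniformConvexOn_zero.add (strongConvexOn_mul_norm_sub_sq hg.1 1 w)

lemma norm_sub_sq_le_of_isMinOn_mul_add_half_norm_sub_sq {g : E → ℝ} {α : ℝ} {w u z : E}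
    (hg : ConvexOn ℝ s g) (hα : 0 ≤ α)
    (hmin : IsMinOn (fun v ↦ α * g v + ‖v - w‖ ^ 2 / 2) s u) (hu : u ∈ s) (hz : z ∈ s) :
    ‖u - z‖ ^ 2 ≤ ‖w - z‖ ^ 2 - 2 * α * (g u - g z) - ‖u - w‖ ^ 2 := by
  have growth : α * g u + ‖u - w‖ ^ 2 / 2 + 1 / 2 * ‖u - z‖ ^ 2 ≤ α * g z + ‖z - w‖ ^ 2 / 2 :=
    add_modulus_le_of_uniformConvexOn_of_isMinOn
      (strongConvexOn_mul_add_half_norm_sub_sq hg hα w) hmin hu hz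
  rw [norm_sub_rev w z]
  linarith

end StrongConvexity

lemma convexOn_toReal {E : Type*} [AddCommMonoid E] [Module ℝ E] {f : E → EReal}
    (hne_bot : ∀ v, f v ≠ ⊥)
    (hconv : ∀ x y : E, ∀ a b : ℝ, 0 ≤ a → 0 ≤ b → a + b = 1 →
      f (a • x + b • y) ≤ (a : EReal) * f x + (b : EReal) * f y) :
    ConvexOn ℝ {v | f v < ⊤} fun v ↦ (f v).toReal := by
  have le_coe : ∀ ⦃x⦄, f x < ⊤ → ∀ ⦃y⦄, f y < ⊤ → ∀ ⦃a b : ℝ⦄, 0 ≤ a → 0 ≤ b → a + b = 1 →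
      f (a • x + b • y) ≤ ((a * (f x).toReal + b * (f y).toReal : ℝ) : EReal) := by
    intro x hx y hy a b ha hb hab
    rw [EReal.coe_add, EReal.coe_mul, EReal.coe_mul, EReal.coe_toReal hx.ne (hne_bot x),
      EReal.coe_toReal hy.ne (hne_bot y)]
    exact hconv x y a b ha hb hab
  refine ⟨fun x hx y hy a b ha hb hab ↦ ?_, fun x hx y hy a b ha hb hab ↦ ?_⟩
  · exact (le_coe hx hy ha hb hab).trans_lt (EReal.coe_lt_top _)
  · exact EReal.toReal_le_toReal (le_coe hx hy ha hb hab) (hne_bot _) (EReal.coe_ne_top _)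

/-- `IsProxPoint α f w u` says that `u` is a proximal point of `α f` at `w`, i.e. a global minimizer
of `v ↦ α f v + ‖v - w‖² / 2`. The value `⊤` encodes points outside the domain of `f`. -/
def IsProxPoint {E : Type*} [SeminormedAddCommGroup E] (α : ℝ) (f : E → EReal) (w u : E) : Prop :=
  ∀ v : E, (α : EReal) * f u + ((‖u - w‖ ^ 2 / 2 : ℝ) : EReal)
    ≤ (α : EReal) * f v + ((‖v - w‖ ^ 2 / 2 : ℝ) : EReal)

namespace IsProxPoint

variable {E : Type*} [SeminormedAddCommGroup E] {α : ℝ} {f : E → EReal} {w u z : E}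

lemma lt_top (hu : IsProxPoint α f w u) (hα : 0 < α) (hz : f z < ⊤) : f u < ⊤ := by
  have objective_ne_top : (α : EReal) * f z + ((‖z - w‖ ^ 2 / 2 : ℝ) : EReal) ≠ ⊤ := by
    refine EReal.add_ne_top ?_ (EReal.coe_ne_top _)
    simp [EReal.mul_ne_top, hα.le, hz.ne]
  refine Ne.lt_top fun hu_top ↦ objective_ne_top ?_
  simpa only [hu_top, EReal.coe_mul_top_of_pos hα, EReal.top_add_coe, top_le_iff] using hu z

lemma isMinOn_toReal (hu : IsProxPoint α f w u) (hne_bot : ∀ v, f v ≠ ⊥) (hu_top : f u < ⊤) :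
    IsMinOn (fun v ↦ α * (f v).toReal + ‖v - w‖ ^ 2 / 2) {v | f v < ⊤} u := by
  refine isMinOn_iff.2 fun v hv ↦ ?_
  have hle := hu v
  rw [← EReal.coe_toReal hu_top.ne (hne_bot u), ← EReal.coe_toReal (ne_of_lt hv) (hne_bot v)] at hle
  exact_mod_cast hle

end IsProxPoint

theorem prox_step_fejer_inequality_general
    {U : Type*} [NormedAddCommGroup U] [InnerProductSpace ℝ U]
    {f : U → EReal} (hne_bot : ∀ v, f v ≠ ⊥)
    (hconv : ∀ x y : U, ∀ a b : ℝ, 0 ≤ a → 0 ≤ b → a + b = 1 →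
      f (a • x + b • y) ≤ (a : EReal) * f x + (b : EReal) * f y)
    {α : ℝ} (hα : 0 < α) {w u z : U} (hu : IsProxPoint α f w u) (hz : f z < ⊤) :
    ((‖u - z‖ ^ 2 : ℝ) : EReal)
        ≤ ((‖w - z‖ ^ 2 : ℝ) : EReal) - ((2 * α : ℝ) : EReal) * (f u - f z)
          - ((‖u - w‖ ^ 2 : ℝ) : EReal) ∧
    ((‖u - z‖ ^ 2 : ℝ) : EReal)
        ≤ ((‖w - z‖ ^ 2 : ℝ) : EReal) - ((2 * α : ℝ) : EReal) * (f u - f z) := by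
  have hu_top : f u < ⊤ := hu.lt_top hα hz
  have fejer := norm_sub_sq_le_of_isMinOn_mul_add_half_norm_sub_sq (convexOn_toReal hne_bot hconv)
    hα.le (hu.isMinOn_toReal hne_bot hu_top) hu_top hz
  rw [← EReal.coe_toReal hu_top.ne (hne_bot u), ← EReal.coe_toReal hz.ne (hne_bot z)]
  norm_cast
  exact ⟨fejer, fejer.trans (sub_le_self _ (sq_nonneg _))⟩

/-- The fundamental per-iteration inequality for the proximal update: if `wplus`
minimizes `v ↦ α f v + ‖v - w‖²/2` for a proper convex function
`f : U → ℝ ∪ {+∞}`, then for every `z` with `f z < ∞`,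
`‖wplus - z‖² ≤ ‖w - z‖² - 2α (f wplus - f z) - ‖wplus - w‖²`, and in particular
`‖wplus - z‖² ≤ ‖w - z‖² - 2α (f wplus - f z)`. -/
theorem prox_step_fejer_inequality
    {U : Type*} [NormedAddCommGroup U] [InnerProductSpace ℝ U] [FiniteDimensional ℝ U]
    (f : U → EReal) (hne_bot : ∀ v, f v ≠ ⊥) (hproper : ∃ v, f v ≠ ⊤)
    (hconv : ∀ x y : U, ∀ a b : ℝ, 0 ≤ a → 0 ≤ b → a + b = 1 →
      f (a • x + b • y) ≤ (a : EReal) * f x + (b : EReal) * f y)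
    (α : ℝ) (hα : 0 < α) (w wplus : U)
    (hmin : ∀ v : U, (α : EReal) * f wplus + ((‖wplus - w‖ ^ 2 / 2 : ℝ) : EReal)
      ≤ (α : EReal) * f v + ((‖v - w‖ ^ 2 / 2 : ℝ) : EReal)) :
    ∀ z : U, f z < ⊤ →
      ((‖wplus - z‖ ^ 2 : ℝ) : EReal)
          ≤ ((‖w - z‖ ^ 2 : ℝ) : EReal) - ((2 * α : ℝ) : EReal) * (f wplus - f z)
            - ((‖wplus - w‖ ^ 2 : ℝ) : EReal) ∧
      ((‖wplus - z‖ ^ 2 : ℝ) : EReal)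
          ≤ ((‖w - z‖ ^ 2 : ℝ) : EReal) - ((2 * α : ℝ) : EReal) * (f wplus - f z) :=
  fun _ hz ↦ prox_step_fejer_inequality_general hne_bot hconv hα hmin hz
end

section
/- Let $U$ be a finite-dimensional real inner product space, let $C \subseteq U$ be a nonempty closed convex set, and let $g : U \to \mathbb{R}$ be convex and Lipschitz continuous with constant $L$ on $C$. Let $f = g + \mathbb{I}_C$ (so $f(v) = g(v)$ for $v \in C$, $+\infty$ otherwise). Then for every $\alpha > 0$ and $w \in C$, the minimizer $w^+$ of $v \mapsto \alpha f(v) + \tfrac{1}{2}\|v - w\|^2$ satisfies $\|w^+ - w\| \le \alpha L$. -/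
open NNReal

/-!
If `w⁺` were at distance `d > K := α L` from `w`, the segment from `w` to `w⁺` would contain a point
`v` at distance exactly `K` from `w`. Moving from `w⁺` to `v` changes `α g` by at most `K (d - K)`,
so minimality of `w⁺` gives `d ^ 2 - K ^ 2 ≤ 2 K (d - K)`, that is, `(d - K) ^ 2 ≤ 0`.
-/

theorem sq_dist_sub_sq_dist_le_of_isMinOn {X : Type*} [PseudoMetricSpace X] {C : Set X} {g : X → ℝ}
    {L : ℝ≥0} {α : ℝ} {w x v : X} (hg : LipschitzOnWith L g C) (hα : 0 ≤ α) (hx : x ∈ C)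
    (hmin : IsMinOn (fun y ↦ α * g y + dist y w ^ 2 / 2) C x) (hv : v ∈ C) :
    dist x w ^ 2 - dist v w ^ 2 ≤ 2 * (α * L) * dist v x := by
  have hxv : α * g x + dist x w ^ 2 / 2 ≤ α * g v + dist v w ^ 2 / 2 := hmin hv
  have hgv : g v ≤ g x + L * dist v x := hg.le_add_mul hv hx
  linarith [mul_le_mul_of_nonneg_left hgv hα]

section SeminormedSpace

variable {E : Type*} [SeminormedAddCommGroup E] [NormedSpace ℝ E]

theorem exists_mem_segment_dist_eq {w x : E} {r : ℝ} (hr : 0 ≤ r) (hrx : r ≤ dist x w) :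
    ∃ v ∈ segment ℝ w x, dist v w = r ∧ dist v x = dist x w - r := by
  set d := dist x w with hd
  have hd0 : 0 ≤ d := dist_nonneg
  set t := r / d
  have htd : t * d = r := div_mul_cancel_of_imp fun h ↦ le_antisymm (hrx.trans h.le) hr
  have ht0 : 0 ≤ t := div_nonneg hr hd0
  have ht1 : t ≤ 1 := div_le_one_of_le₀ hrx hd0
  refine ⟨AffineMap.lineMap w x t, ?_, ?_, ?_⟩
  · exact segment_eq_image_lineMap ℝ w x ▸ Set.mem_image_of_mem _ ⟨ht0, ht1⟩
  · rw [dist_lineMap_left, Real.norm_of_nonneg ht0, dist_comm, ← hd, htd]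
  · rw [dist_lineMap_right, Real.norm_of_nonneg (sub_nonneg.2 ht1), dist_comm, ← hd, sub_mul,
      one_mul, htd]

theorem prox_step_displacement_bound_general {C : Set E} {g : E → ℝ} {L : ℝ≥0} {α : ℝ}
    {w wplus : E} (hC : StarConvex ℝ w C) (hg : LipschitzOnWith L g C) (hα : 0 ≤ α)
    (hwplus : wplus ∈ C) (hmin : IsMinOn (fun v ↦ α * g v + ‖v - w‖ ^ 2 / 2) C wplus) :
    ‖wplus - w‖ ≤ α * L := by
  simp only [← dist_eq_norm] at hmin ⊢
  by_contra! hlt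
  obtain ⟨v, hv, hvw, hvx⟩ := exists_mem_segment_dist_eq (by positivity) hlt.le
  have hvC : v ∈ C := hC.segment_subset hwplus hv
  have hle : dist wplus w ^ 2 - (α * L) ^ 2 ≤ 2 * (α * L) * (dist wplus w - α * L) := by
    simpa only [hvw, hvx] using sq_dist_sub_sq_dist_le_of_isMinOn hg hα hwplus hmin hvC
  have hsq : 0 < (dist wplus w - α * L) ^ 2 := pow_pos (sub_pos.2 hlt) 2
  linarith

end SeminormedSpace

/-- Displacement bound for a proximal step: if `f = g + I_C` with `g` convex and
`L`-Lipschitz on the nonempty closed convex set `C`, `w ∈ C`, and `wplus` minimizes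
`v ↦ α f v + ‖v - w‖²/2` (equivalently, minimizes `v ↦ α g v + ‖v - w‖²/2` over `C`),
then `‖wplus - w‖ ≤ α L`. -/
theorem prox_step_displacement_bound
    {U : Type*} [NormedAddCommGroup U] [InnerProductSpace ℝ U] [FiniteDimensional ℝ U]
    (C : Set U) (hCne : C.Nonempty) (hCclosed : IsClosed C) (hCconv : Convex ℝ C)
    (g : U → ℝ) (hgconv : ConvexOn ℝ C g) (L : ℝ≥0) (hLip : LipschitzOnWith L g C)
    (α : ℝ) (hα : 0 < α) (w : U) (hw : w ∈ C) (wplus : U) (hwplus : wplus ∈ C)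
    (hmin : ∀ v ∈ C, α * g wplus + ‖wplus - w‖ ^ 2 / 2 ≤ α * g v + ‖v - w‖ ^ 2 / 2) :
    ‖wplus - w‖ ≤ α * (L : ℝ) :=
  prox_step_displacement_bound_general (hCconv.starConvex hw) hLip hα.le hwplus (isMinOn_iff.2 hmin)
end
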